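/- Let Γ be a finitely generated group with finite generating set X, and suppose Γ has property (A) witnessed by a representation ρ : Γ → SL(m, O_S) into matrices over a ring of S-integers O_S of a number field, such that non-conjugate elements have distinct traces under ρ. Then there is a constant C (depending on Γ, X, ρ) such that for all non-conjugate γ, η ∈ Γ with word lengths at most n, Con_Γ([γ],[η]) ≤ C·n^{m²−1}; consequently Conj_Γ(n) ⪯ n^{m²−1}. -/

import Mathlib

/-- `γ` has word length at most `n` with respect to the generating set `X`. -/
def inBall {Γ : Type*} [Group Γ] (X : Finset Γ) (n : ℕ) (γ : Γ) : Prop :=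
  ∃ l : List Γ, (∀ x ∈ l, x ∈ X ∨ x⁻¹ ∈ X) ∧ l.length ≤ n ∧ l.prod = γ

section PrimeIdealCounting

open NumberField

variable (K : Type*) [Field K] [NumberField K]

open Classical in
/-- The nonzero prime ideals of the ring of integers of `K` of norm at most `X`. -/
noncomputable def primeIdealsLE (X : ℕ) : Finset (Ideal (𝓞 K)) :=
  (Ideal.finite_setOfPred_absNorm_le (S := 𝓞 K) X).toFinset.filter Prime

variable {K}

theorem mem_primeIdealsLE {X : ℕ} {P : Ideal (𝓞 K)} :
    P ∈ primeIdealsLE K X ↔ Ideal.absNorm P ≤ X ∧ Prime P := by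
  simp [primeIdealsLE]

theorem two_le_absNorm_of_prime {P : Ideal (𝓞 K)} (hP : Prime P) : 2 ≤ Ideal.absNorm P := by
  have h0 : Ideal.absNorm P ≠ 0 := Ideal.absNorm_ne_zero_iff_mem_nonZeroDivisors.2
    (mem_nonZeroDivisors_of_ne_zero hP.ne_zero)
  have h1 : Ideal.absNorm P ≠ 1 := by
    rw [Ne, Ideal.absNorm_eq_one_iff]
    intro h
    exact hP.not_isUnit (by rw [h, ← Ideal.one_eq_top]; exact isUnit_one)
  omega

theorem prod_absNorm_le_absNorm_span {F : Finset (Ideal (𝓞 K))} (hF : ∀ P ∈ F, Prime P)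
    {a : 𝓞 K} (ha : a ≠ 0) (haF : ∀ P ∈ F, a ∈ P) :
    ∏ P ∈ F, Ideal.absNorm P ≤ Ideal.absNorm (Ideal.span {a}) := by
  have h : ∏ P ∈ F, P ∣ Ideal.span {a} := by
    refine Finset.prod_primes_dvd _ hF fun P hP => ?_
    rw [Ideal.dvd_span_singleton]
    exact haF P hP
  have h' := map_dvd Ideal.absNorm h
  rw [map_prod] at h'
  refine Nat.le_of_dvd (Nat.pos_of_ne_zero ?_) h'
  rw [Ne, Ideal.absNorm_eq_zero_iff, Ideal.span_singleton_eq_bot]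
  exact ha

theorem primorial_mem_of_absNorm_le {P : Ideal (𝓞 K)} (hP : Prime P) {X : ℕ}
    (hX : Ideal.absNorm P ≤ X) : ((primorial X : ℕ) : 𝓞 K) ∈ P := by
  have hPp : P.IsPrime := Ideal.isPrime_of_prime hP
  have h2 := two_le_absNorm_of_prime hP
  have key : ∀ n : ℕ, n ≠ 0 → (n : 𝓞 K) ∈ P → ∃ p, p.Prime ∧ p ≤ n ∧ (p : 𝓞 K) ∈ P := by
    intro n
    induction n using Nat.strong_induction_on with
    | _ n ih =>
      intro hn hmem
      by_cases h1 : n = 1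
      · subst h1
        exact absurd ((Ideal.eq_top_iff_one P).2 (by simpa using hmem)) hPp.ne_top
      obtain ⟨p, hp, k, rfl⟩ := Nat.exists_prime_and_dvd h1
      have hk : k ≠ 0 := by rintro rfl; simp at hn
      push_cast at hmem
      rcases hPp.mem_or_mem hmem with h | h
      · exact ⟨p, hp, Nat.le_mul_of_pos_right _ (Nat.pos_of_ne_zero hk), h⟩
      · have hlt : k < p * k := by
          have := hp.two_le
          have : 0 < k := Nat.pos_of_ne_zero hk
          nlinarith
        obtain ⟨q, hq, hqk, hqP⟩ := ih k hlt hk h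
        exact ⟨q, hq, hqk.trans hlt.le, hqP⟩
  obtain ⟨p, hp, hpn, hpP⟩ := key _ (by omega) (Ideal.absNorm_mem P)
  have hdvd : p ∣ primorial X := by
    rw [primorial]
    refine Finset.dvd_prod_of_mem _ ?_
    simp only [Finset.mem_filter, Finset.mem_range]
    exact ⟨by omega, hp⟩
  obtain ⟨c, hc⟩ := hdvd
  rw [hc]
  push_cast
  exact P.mul_mem_right _ hpP

theorem sum_log_absNorm_le (X : ℕ) :
    ∑ P ∈ primeIdealsLE K X, Real.log (Ideal.absNorm P) ≤
      (Module.finrank ℚ K * Real.log 4) * X := by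
  have hne : ((primorial X : ℕ) : 𝓞 K) ≠ 0 := by
    exact_mod_cast (primorial_pos X).ne'
  have h := prod_absNorm_le_absNorm_span (F := primeIdealsLE K X)
    (fun P hP => (mem_primeIdealsLE.1 hP).2) hne
    (fun P hP => primorial_mem_of_absNorm_le (mem_primeIdealsLE.1 hP).2 (mem_primeIdealsLE.1 hP).1)
  have h2 : Ideal.absNorm (Ideal.span {((primorial X : ℕ) : 𝓞 K)}) ≤
      (4 ^ X) ^ Module.finrank ℚ K := by
    rw [Ideal.absNorm_span_singleton, Algebra.norm_natCast, RingOfIntegers.rank]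
    simp only [Int.natAbs_pow, Int.natAbs_natCast]
    exact Nat.pow_le_pow_left (primorial_le_four_pow X) _
  rw [← Real.log_prod]
  · have h3 : (∏ P ∈ primeIdealsLE K X, (Ideal.absNorm P : ℝ)) ≤
        (4 ^ X) ^ Module.finrank ℚ K := by
      exact_mod_cast h.trans h2
    have hpos : (0 : ℝ) < ∏ P ∈ primeIdealsLE K X, (Ideal.absNorm P : ℝ) := by
      refine Finset.prod_pos fun P hP => ?_
      have := two_le_absNorm_of_prime (mem_primeIdealsLE.1 hP).2
      exact_mod_cast (by omega : 0 < Ideal.absNorm P)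
    refine (Real.log_le_log hpos h3).trans (le_of_eq ?_)
    rw [Real.log_pow, Real.log_pow]
    ring
  · intro P hP
    have := two_le_absNorm_of_prime (mem_primeIdealsLE.1 hP).2
    exact_mod_cast (by omega : Ideal.absNorm P ≠ 0)

theorem primeIdealsLE_zero : primeIdealsLE K 0 = ∅ := by
  ext P
  simp only [mem_primeIdealsLE, Finset.notMem_empty, iff_false, not_and]
  intro h hP
  have := two_le_absNorm_of_prime hP
  omega

theorem sum_primeIdealsLE_succ (g : ℕ → ℝ) (X : ℕ) :
    ∃ c : ℝ, ∀ f : ℕ → ℝ, ∑ P ∈ primeIdealsLE K (X + 1), g (Ideal.absNorm P) * f (Ideal.absNorm P) =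
      ∑ P ∈ primeIdealsLE K X, g (Ideal.absNorm P) * f (Ideal.absNorm P) + c * f (X + 1) := by
  classical
  refine ⟨∑ P ∈ (primeIdealsLE K (X + 1)) with ¬ Ideal.absNorm P ≤ X, g (X + 1), fun f => ?_⟩
  rw [← Finset.sum_filter_add_sum_filter_not _ (fun P => Ideal.absNorm P ≤ X)]
  congr 1
  · refine Finset.sum_congr ?_ fun _ _ => rfl
    ext P
    simp only [Finset.mem_filter, mem_primeIdealsLE]
    constructor
    · rintro ⟨⟨_, h2⟩, h3⟩
      exact ⟨h3, h2⟩
    · rintro ⟨h1, h2⟩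
      exact ⟨⟨h1.trans X.le_succ, h2⟩, h1⟩
  · rw [Finset.sum_mul]
    refine Finset.sum_congr rfl fun P hP => ?_
    simp only [Finset.mem_filter, mem_primeIdealsLE] at hP
    have : Ideal.absNorm P = X + 1 := by omega
    rw [this]

/-- Partial summation against the Chebyshev upper bound. -/
theorem sum_log_absNorm_mul_le {f : ℕ → ℝ} (hf : ∀ n, 1 ≤ n → f (n + 1) ≤ f n)
    (hf0 : ∀ n, 0 ≤ f n) (X : ℕ) :
    ∑ P ∈ primeIdealsLE K X, Real.log (Ideal.absNorm P) * f (Ideal.absNorm P) ≤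
      (Module.finrank ℚ K * Real.log 4) * ∑ n ∈ Finset.Icc 1 X, f n := by
  set C : ℝ := Module.finrank ℚ K * Real.log 4
  have key : ∑ P ∈ primeIdealsLE K X, Real.log (Ideal.absNorm P) * f (Ideal.absNorm P) +
      (C * X - ∑ P ∈ primeIdealsLE K X, Real.log (Ideal.absNorm P)) * f X ≤
      C * ∑ n ∈ Finset.Icc 1 X, f n := by
    induction X with
    | zero => simp [primeIdealsLE_zero]
    | succ X ih =>
      obtain ⟨c, hc⟩ := sum_primeIdealsLE_succ (K := K) (fun n => Real.log n) X
      have h1 := hc f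
      have h2 := hc (fun _ => 1)
      simp only [mul_one] at h2
      rw [h1, h2, Finset.sum_Icc_succ_top (by omega)]
      have h3 := sum_log_absNorm_le (K := K) X
      have h4 : (C * X - ∑ P ∈ primeIdealsLE K X, Real.log (Ideal.absNorm P)) * f (X + 1) ≤
          (C * X - ∑ P ∈ primeIdealsLE K X, Real.log (Ideal.absNorm P)) * f X := by
        rcases Nat.eq_zero_or_pos X with rfl | hX
        · simp [primeIdealsLE_zero]
        · exact mul_le_mul_of_nonneg_left (hf X hX) (sub_nonneg.2 h3)
      push_cast
      linarith
  have h3 := sum_log_absNorm_le (K := K) X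
  have := mul_nonneg (sub_nonneg.2 h3) (hf0 X)
  linarith

theorem sum_inv_sq_le (X : ℕ) : ∑ n ∈ Finset.Icc 1 X, 1 / (n : ℝ) ^ 2 ≤ 2 := by
  have key : ∑ n ∈ Finset.Icc 1 X, 1 / (n : ℝ) ^ 2 ≤ 2 - 1 / (X : ℝ) := by
    induction X with
    | zero => norm_num
    | succ X ih =>
      rw [Finset.sum_Icc_succ_top (by omega)]
      rcases Nat.eq_zero_or_pos X with rfl | hX
      · norm_num
      have hX' : (0 : ℝ) < X := by exact_mod_cast hX
      have h : 1 / ((X + 1 : ℕ) : ℝ) ^ 2 ≤ 1 / (X : ℝ) - 1 / ((X + 1 : ℕ) : ℝ) := by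
        push_cast
        rw [div_sub_div _ _ (by positivity) (by positivity),
          div_le_div_iff₀ (by positivity) (by positivity)]
        nlinarith
      linarith
  have : (0 : ℝ) ≤ 1 / (X : ℝ) := by positivity
  linarith

theorem sum_rpow_le {d : ℕ} (hd : 0 < d) (X : ℕ) :
    ∑ n ∈ Finset.Icc 1 X, (n : ℝ) ^ ((1 : ℝ) / d - 1) ≤ d * (X : ℝ) ^ ((1 : ℝ) / d) := by
  have hd' : (1 : ℝ) ≤ d := by exact_mod_cast hd
  induction X with
  | zero =>
    simp only [zero_lt_one, Finset.Icc_eq_empty_of_lt, Finset.sum_empty]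
    positivity
  | succ X ih =>
    rw [Finset.sum_Icc_succ_top (by omega)]
    set x : ℝ := ((X + 1 : ℕ) : ℝ) with hx
    have hx1 : 1 ≤ x := by rw [hx]; push_cast; linarith [(X.cast_nonneg : (0 : ℝ) ≤ X)]
    have hX : (X : ℝ) = x * (1 + -(1 / x)) := by
      rw [hx]; push_cast; field_simp; ring
    have hb := rpow_one_add_le_one_add_mul_self (s := -(1 / x)) (p := 1 / d)
      (by rw [neg_le_neg_iff, div_le_one (by linarith)]; exact hx1) (by positivity)
      (by rw [div_le_one (by linarith)]; exact hd')
    have h1 : (X : ℝ) ^ ((1 : ℝ) / d) ≤ x ^ ((1 : ℝ) / d) * (1 + 1 / d * -(1 / x)) := by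
      rw [hX, Real.mul_rpow (by linarith)]
      · exact mul_le_mul_of_nonneg_left hb (by positivity)
      · have : 1 / x ≤ 1 := by rw [div_le_one (by linarith)]; exact hx1
        linarith
    have h2 : x ^ ((1 : ℝ) / d - 1) = x ^ ((1 : ℝ) / d) * (1 / x) := by
      rw [Real.rpow_sub_one (by linarith)]; ring
    have h3 : d * (X : ℝ) ^ ((1 : ℝ) / d) ≤ d * (x ^ ((1 : ℝ) / d) * (1 + 1 / d * -(1 / x))) :=
      mul_le_mul_of_nonneg_left h1 (by linarith)
    have h4 : d * (x ^ ((1 : ℝ) / d) * (1 + 1 / d * -(1 / x))) =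
        d * x ^ ((1 : ℝ) / d) - x ^ ((1 : ℝ) / d) * (1 / x) := by
      field_simp
      ring
    linarith

open Classical in
theorem log_absNorm_eq_sum {I : Ideal (𝓞 K)} (hI : I ≠ ⊥) {X : ℕ} (hX : Ideal.absNorm I ≤ X) :
    Real.log (Ideal.absNorm I) = ∑ P ∈ primeIdealsLE K X,
      Real.log (Ideal.absNorm P) * ∑ k ∈ Finset.Icc 1 X, if P ^ k ∣ I then (1 : ℝ) else 0 := by
  have hN : Ideal.absNorm I ≠ 0 := by rwa [Ne, Ideal.absNorm_eq_zero_iff]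
  have hle : ∀ J : Ideal (𝓞 K), J ∣ I → Ideal.absNorm J ≤ X := fun J hJ =>
    (Nat.le_of_dvd (Nat.pos_of_ne_zero hN) (map_dvd Ideal.absNorm hJ)).trans hX
  set s := UniqueFactorizationMonoid.normalizedFactors I with hs
  have hprod : s.prod = I := Ideal.prod_normalizedFactors_eq_self hI
  have hpow : ∀ P : Ideal (𝓞 K), Prime P → ∀ k, P ^ k ∣ I ↔ k ≤ s.count P := by
    intro P hP k
    rw [pow_dvd_iff_le_emultiplicity,
      UniqueFactorizationMonoid.le_emultiplicity_iff_replicate_le_normalizedFactors hP.irreducible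
        hI, Multiset.le_count_iff_replicate_le, normalize_eq]
  have hcount : ∀ P ∈ primeIdealsLE K X,
      (∑ k ∈ Finset.Icc 1 X, if P ^ k ∣ I then (1 : ℝ) else 0) = s.count P := by
    intro P hP
    have hP' := (mem_primeIdealsLE.1 hP).2
    have hc : s.count P ≤ X := by
      have h1 := hle _ ((hpow P hP' _).2 le_rfl)
      rw [map_pow] at h1
      exact (Nat.lt_pow_self (two_le_absNorm_of_prime hP')).le.trans h1
    rw [Finset.sum_boole]
    congr 1
    have : {k ∈ Finset.Icc 1 X | P ^ k ∣ I} = Finset.Icc 1 (s.count P) := by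
      ext k
      simp only [Finset.mem_filter, Finset.mem_Icc, hpow P hP']
      omega
    rw [this, Nat.card_Icc]
    omega
  rw [Finset.sum_congr rfl fun P hP => by rw [hcount P hP]]
  have hsub : s.toFinset ⊆ primeIdealsLE K X := by
    intro P hP
    rw [Multiset.mem_toFinset] at hP
    rw [mem_primeIdealsLE]
    exact ⟨hle P (UniqueFactorizationMonoid.dvd_of_mem_normalizedFactors hP),
      UniqueFactorizationMonoid.prime_of_normalized_factor P hP⟩
  have h1 : (Ideal.absNorm I : ℝ) = ∏ P ∈ s.toFinset, (Ideal.absNorm P : ℝ) ^ s.count P := by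
    rw [← hprod, map_multiset_prod, Finset.prod_multiset_map_count]
    push_cast
    rfl
  rw [h1, Real.log_prod]
  · rw [← Finset.sum_subset hsub]
    · refine Finset.sum_congr rfl fun P _ => ?_
      rw [Real.log_pow, mul_comm]
    · intro P _ hP
      rw [Multiset.mem_toFinset] at hP
      rw [Multiset.count_eq_zero_of_notMem hP]
      simp
  · intro P hP
    have := two_le_absNorm_of_prime (mem_primeIdealsLE.1 (hsub hP)).2
    exact pow_ne_zero _ (by exact_mod_cast (by omega : Ideal.absNorm P ≠ 0))

theorem card_chooseBasisIndex_ringOfIntegers :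
    Fintype.card (Module.Free.ChooseBasisIndex ℤ (𝓞 K)) = Module.finrank ℚ K := by
  rw [← Module.finrank_eq_card_chooseBasisIndex, RingOfIntegers.rank]

/-- A nonzero ideal contains a nonzero element with small coordinates. -/
theorem exists_mem_ne_zero_repr_le {I : Ideal (𝓞 K)} (hI : I ≠ ⊥) {t : ℕ}
    (ht : Ideal.absNorm I < (t + 1) ^ Module.finrank ℚ K) :
    ∃ α ∈ I, α ≠ 0 ∧ ∀ i, |(RingOfIntegers.basis K).repr α i| ≤ t := by
  classical
  set b := RingOfIntegers.basis K
  let B : Finset (Module.Free.ChooseBasisIndex ℤ (𝓞 K) → ℤ) :=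
    Fintype.piFinset fun _ => Finset.Ico (0 : ℤ) (t + 1)
  have hfin : Finite (𝓞 K ⧸ I) := Ideal.finiteQuotientOfFreeOfNeBot I hI
  have := Fintype.ofFinite (𝓞 K ⧸ I)
  have hcard : (Finset.univ : Finset (𝓞 K ⧸ I)).card < B.card := by
    have h1 : Fintype.card (𝓞 K ⧸ I) = Ideal.absNorm I := by
      rw [Ideal.absNorm_apply, Submodule.cardQuot_apply, Nat.card_eq_fintype_card]
    rw [Finset.card_univ, h1, Fintype.card_piFinset]
    simp only [Int.card_Ico, Finset.prod_const, Finset.card_univ,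
      card_chooseBasisIndex_ringOfIntegers]
    simpa using ht
  obtain ⟨v, hv, w, hw, hne, heq⟩ := Finset.exists_ne_map_eq_of_card_lt_of_maps_to hcard
    (f := fun v => Ideal.Quotient.mk I (b.equivFun.symm v)) 
    (fun _ _ => Finset.mem_coe.2 (Finset.mem_univ _))
  refine ⟨b.equivFun.symm v - b.equivFun.symm w, (Ideal.Quotient.mk_eq_mk_iff_sub_mem _ _).1 heq,
    ?_, fun i => ?_⟩
  · rw [sub_ne_zero]
    exact fun h => hne (b.equivFun.symm.injective h)
  · rw [← map_sub, ← Module.Basis.equivFun_apply, LinearEquiv.apply_symm_apply]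
    have h1 := Finset.mem_Ico.1 (Fintype.mem_piFinset.1 hv i)
    have h2 := Finset.mem_Ico.1 (Fintype.mem_piFinset.1 hw i)
    rw [Pi.sub_apply, abs_le]
    omega

/-- Every residue class modulo a nonzero ideal has a representative with small coordinates. -/
theorem exists_bounded_representative :
    ∃ C : ℕ, ∀ I : Ideal (𝓞 K), I ≠ ⊥ → ∀ t : ℕ,
      Ideal.absNorm I < (t + 1) ^ Module.finrank ℚ K →
      ∀ x : 𝓞 K, ∃ r : 𝓞 K, x - r ∈ I ∧ ∀ i, |(RingOfIntegers.basis K).repr r i| ≤ (C * t : ℕ) := by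
  set b := RingOfIntegers.basis K with hb
  let M : ℤ := ∑ i, ∑ j, ∑ k, |b.repr (b j * b k) i|
  have hM0 : 0 ≤ M := by positivity
  refine ⟨Module.finrank ℚ K * M.toNat, fun I hI t ht x => ?_⟩
  obtain ⟨α, hαI, hα0, hα⟩ := exists_mem_ne_zero_repr_le hI ht
  have hmul : ∀ i k, |b.repr (α * b k) i| ≤ M * t := by
    intro i k
    have h1 : b.repr (α * b k) i = ∑ j, b.repr α j * b.repr (b j * b k) i := by
      conv_lhs => rw [← b.sum_repr α, Finset.sum_mul, map_sum]
      simp only [smul_mul_assoc, map_smul, Finsupp.coe_finsetSum, Finset.sum_apply,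
        Finsupp.smul_apply, smul_eq_mul]
    rw [h1]
    calc |∑ j, b.repr α j * b.repr (b j * b k) i|
        ≤ ∑ j, |b.repr α j * b.repr (b j * b k) i| := Finset.abs_sum_le_sum_abs _ _
      _ ≤ ∑ j, |b.repr (b j * b k) i| * t := by
          refine Finset.sum_le_sum fun j _ => ?_
          rw [abs_mul, mul_comm]
          exact mul_le_mul_of_nonneg_left (hα j) (abs_nonneg _)
      _ = (∑ j, |b.repr (b j * b k) i|) * t := by rw [Finset.sum_mul]
      _ ≤ M * t := by
          refine mul_le_mul_of_nonneg_right ?_ (by positivity)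
          calc ∑ j, |b.repr (b j * b k) i| ≤ ∑ j, ∑ k, |b.repr (b j * b k) i| := by
                refine Finset.sum_le_sum fun j _ => ?_
                exact Finset.single_le_sum (f := fun k => |b.repr (b j * b k) i|)
                  (fun _ _ => abs_nonneg _) (Finset.mem_univ k)
            _ ≤ M := Finset.single_le_sum (f := fun i => ∑ j, ∑ k, |b.repr (b j * b k) i|)
                  (fun _ _ => by positivity) (Finset.mem_univ i)
  have hα0' : algebraMap (𝓞 K) K α ≠ 0 := by
    simpa using hα0
  set q := (integralBasis K).repr (algebraMap (𝓞 K) K x / algebraMap (𝓞 K) K α)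
  let z : 𝓞 K := ∑ k, ⌊q k⌋ • b k
  refine ⟨x - α * z, ?_, fun i => ?_⟩
  · rw [sub_sub_cancel]
    exact I.mul_mem_right _ hαI
  · have hx : algebraMap (𝓞 K) K (x - α * z) =
        ∑ k, Int.fract (q k) • algebraMap (𝓞 K) K (α * b k) := by
      have h1 : algebraMap (𝓞 K) K x =
          algebraMap (𝓞 K) K α * ∑ k, q k • algebraMap (𝓞 K) K (b k) := by
        have h2 := (integralBasis K).sum_repr (algebraMap (𝓞 K) K x / algebraMap (𝓞 K) K α)
        simp only [integralBasis_apply] at h2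
        rw [h2, mul_div_cancel₀ _ hα0']
      rw [map_sub, h1, map_mul, map_sum, ← mul_sub, ← Finset.sum_sub_distrib, Finset.mul_sum]
      refine Finset.sum_congr rfl fun k _ => ?_
      rw [map_mul, map_zsmul, Int.fract, sub_smul, Int.cast_smul_eq_zsmul, mul_sub,
        mul_smul_comm, mul_smul_comm]
    have h2 : ((b.repr (x - α * z) i : ℤ) : ℚ) =
        ∑ k, Int.fract (q k) * (b.repr (α * b k) i : ℤ) := by
      have h3 := integralBasis_repr_apply K (x - α * z) i
      rw [hx, map_sum] at h3
      simp only [map_smul, Finsupp.coe_finsetSum, Finset.sum_apply, Finsupp.smul_apply,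
        integralBasis_repr_apply, smul_eq_mul, eq_intCast] at h3
      exact h3.symm
    have h4 : |((b.repr (x - α * z) i : ℤ) : ℚ)| ≤ Module.finrank ℚ K * (M * t) := by
      rw [h2]
      calc |∑ k, Int.fract (q k) * ((b.repr (α * b k) i : ℤ) : ℚ)|
          ≤ ∑ k, |Int.fract (q k) * ((b.repr (α * b k) i : ℤ) : ℚ)| :=
            Finset.abs_sum_le_sum_abs _ _
        _ ≤ ∑ _k : Module.Free.ChooseBasisIndex ℤ (𝓞 K), ((M * t : ℤ) : ℚ) := by
            refine Finset.sum_le_sum fun k _ => ?_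
            rw [abs_mul, abs_of_nonneg (Int.fract_nonneg _)]
            have h5 : |((b.repr (α * b k) i : ℤ) : ℚ)| ≤ ((M * t : ℤ) : ℚ) := by
              exact_mod_cast hmul i k
            calc _ ≤ 1 * |((b.repr (α * b k) i : ℤ) : ℚ)| :=
                  mul_le_mul_of_nonneg_right (Int.fract_lt_one _).le (abs_nonneg _)
              _ ≤ _ := by rw [one_mul]; exact h5
        _ = _ := by
            rw [Finset.sum_const, Finset.card_univ, card_chooseBasisIndex_ringOfIntegers]
            push_cast
            simp
    have h6 : ((Module.finrank ℚ K * M.toNat * t : ℕ) : ℤ) = Module.finrank ℚ K * (M * t) := by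
      push_cast
      rw [Int.toNat_of_nonneg hM0]
      ring
    rw [h6]
    exact_mod_cast h4

variable (K) in
/-- Integer coordinate vectors all of whose coordinates lie in `[lo, hi)`. -/
noncomputable def coordBox (lo hi : ℤ) : Finset (Module.Free.ChooseBasisIndex ℤ (𝓞 K) → ℤ) := by
  classical exact Fintype.piFinset fun _ => Finset.Ico lo hi

theorem mem_coordBox {lo hi : ℤ} {v : Module.Free.ChooseBasisIndex ℤ (𝓞 K) → ℤ} :
    v ∈ coordBox K lo hi ↔ ∀ i, lo ≤ v i ∧ v i < hi := by
  simp [coordBox, Fintype.mem_piFinset]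

theorem card_coordBox (lo hi : ℤ) :
    (coordBox K lo hi).card = (hi - lo).toNat ^ Module.finrank ℚ K := by
  classical
  rw [coordBox, Fintype.card_piFinset]
  simp [card_chooseBasisIndex_ringOfIntegers]

open Classical in
/-- The number of elements of the ideal `I` in the translate by `w` of the coordinate box of
side `y`. -/
noncomputable def boxCount (w : 𝓞 K) (y : ℕ) (I : Ideal (𝓞 K)) : ℕ :=
  ((coordBox K 0 y).filter fun v => w + (RingOfIntegers.basis K).equivFun.symm v ∈ I).card

theorem boxCount_bounds : ∃ C : ℕ, ∀ (w : 𝓞 K) (y t : ℕ) (I : Ideal (𝓞 K)), I ≠ ⊥ →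
    Ideal.absNorm I < (t + 1) ^ Module.finrank ℚ K →
      boxCount w y I * Ideal.absNorm I ≤ (y + C * t) ^ Module.finrank ℚ K ∧
      (y - C * t) ^ Module.finrank ℚ K ≤ boxCount w y I * Ideal.absNorm I := by
  classical
  obtain ⟨C, hC⟩ := exists_bounded_representative (K := K)
  refine ⟨2 * C, fun w y t I hI ht => ?_⟩
  set b := RingOfIntegers.basis K
  have hfin : Finite (𝓞 K ⧸ I) := Ideal.finiteQuotientOfFreeOfNeBot I hI
  have := Fintype.ofFinite (𝓞 K ⧸ I)
  have hN : Ideal.absNorm I = (Finset.univ : Finset (𝓞 K ⧸ I)).card := by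
    rw [Ideal.absNorm_apply, Submodule.cardQuot_apply, Nat.card_eq_fintype_card, Finset.card_univ]
  have hex : ∀ c : 𝓞 K ⧸ I, ∃ r : 𝓞 K, Ideal.Quotient.mk I r = c ∧
      ∀ i, |b.repr r i| ≤ (C * t : ℕ) := by
    intro c
    obtain ⟨x, rfl⟩ := Ideal.Quotient.mk_surjective c
    obtain ⟨r, hr, hr'⟩ := hC I hI t ht x
    exact ⟨r, ((Ideal.Quotient.mk_eq_mk_iff_sub_mem _ _).2 hr).symm, hr'⟩
  choose r hr hrb using hex
  have hrb' : ∀ c i, |b.equivFun (r c) i| ≤ (C * t : ℕ) := fun c i => by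
    rw [Module.Basis.equivFun_apply]; exact hrb c i
  rw [boxCount, hN, ← Finset.card_product]
  constructor
  · have hcard : (coordBox K (-(C * t : ℕ)) (y + (C * t : ℕ))).card =
        (y + 2 * C * t) ^ Module.finrank ℚ K := by
      rw [card_coordBox]
      congr 1
      have : (2 * C * t : ℕ) = (C * t) + (C * t) := by ring
      omega
    rw [← hcard]
    refine Finset.card_le_card_of_injOn (fun p => p.1 + b.equivFun (r p.2)) ?_ ?_
    · rintro ⟨v, c⟩ hp
      simp only [Finset.coe_product, Set.mem_prod, Finset.mem_coe, Finset.mem_filter] at hp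
      refine Finset.mem_coe.2 (mem_coordBox.2 fun i => ?_)
      have h1 := mem_coordBox.1 hp.1.1 i
      have h2 := abs_le.1 (hrb' c i)
      simp only [Pi.add_apply]
      omega
    · rintro ⟨v, c⟩ hp ⟨v', c'⟩ hp' heq
      simp only [Finset.coe_product, Set.mem_prod, Finset.mem_coe, Finset.mem_filter] at hp hp'
      simp only at heq
      have hkey : ∀ (v : Module.Free.ChooseBasisIndex ℤ (𝓞 K) → ℤ) (c : 𝓞 K ⧸ I),
          w + b.equivFun.symm v ∈ I →
          Ideal.Quotient.mk I (w + b.equivFun.symm (v + b.equivFun (r c))) = c := by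
        intro v c hv
        rw [map_add b.equivFun.symm, LinearEquiv.symm_apply_apply, ← add_assoc, map_add,
          Ideal.Quotient.eq_zero_iff_mem.2 hv, zero_add, hr]
      have hc : c = c' := by
        rw [← hkey v c hp.1.2, ← hkey v' c' hp'.1.2, heq]
      subst hc
      rw [add_right_cancel heq]
  · have hcard : (coordBox K (C * t : ℕ) (y - (C * t : ℕ))).card =
        (y - 2 * C * t) ^ Module.finrank ℚ K := by
      rw [card_coordBox]
      congr 1
      have : (2 * C * t : ℕ) = (C * t) + (C * t) := by ring
      omega
    rw [← hcard]
    refine Finset.card_le_card_of_injOn (fun u =>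
      (u - b.equivFun (r (Ideal.Quotient.mk I (w + b.equivFun.symm u))),
        Ideal.Quotient.mk I (w + b.equivFun.symm u))) ?_ ?_
    · intro u hu
      simp only [Finset.coe_product, Set.mem_prod, Finset.mem_coe, Finset.mem_filter,
        Finset.mem_univ, and_true]
      refine ⟨mem_coordBox.2 fun i => ?_, ?_⟩
      · have h1 := mem_coordBox.1 (Finset.mem_coe.1 hu) i
        have h2 := abs_le.1 (hrb' (Ideal.Quotient.mk I (w + b.equivFun.symm u)) i)
        simp only [Pi.sub_apply]
        omega
      · rw [map_sub, LinearEquiv.symm_apply_apply, ← add_sub_assoc,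
          ← Ideal.Quotient.mk_eq_mk_iff_sub_mem, hr]
    · intro u _ u' _ heq
      simp only [Prod.mk.injEq] at heq
      have h1 := heq.1
      rw [heq.2] at h1
      exact sub_left_injective h1

/-- Real form of `boxCount_bounds`: the count is `y ^ d / N I` up to a boundary term. -/
theorem boxCount_asymptotic (D : ℝ) (hD : 0 ≤ D) : ∃ C : ℝ, 0 ≤ C ∧
    ∀ (w : 𝓞 K) (y : ℕ) (I : Ideal (𝓞 K)), 0 < y → I ≠ ⊥ →
    (Ideal.absNorm I : ℝ) ^ ((1 : ℝ) / Module.finrank ℚ K) ≤ D * y →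
      |(boxCount w y I : ℝ) * Ideal.absNorm I - (y : ℝ) ^ Module.finrank ℚ K| ≤
        C * ((y : ℝ) ^ Module.finrank ℚ K *
          ((Ideal.absNorm I : ℝ) ^ ((1 : ℝ) / Module.finrank ℚ K) / y)) := by
  obtain ⟨C, hC⟩ := boxCount_bounds (K := K)
  set d := Module.finrank ℚ K with hd
  have hd0 : 0 < d := Module.finrank_pos
  refine ⟨d * C * (1 + C * D) ^ (d - 1), by positivity, fun w y I hy hI hID => ?_⟩
  set z : ℝ := (Ideal.absNorm I : ℝ) ^ ((1 : ℝ) / d) with hz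
  have hz0 : 0 ≤ z := by positivity
  have hzN : (Ideal.absNorm I : ℝ) = z ^ d := by
    rw [hz, ← Real.rpow_natCast, ← Real.rpow_mul (by positivity), one_div_mul_cancel, Real.rpow_one]
    exact_mod_cast hd0.ne'
  have ht : Ideal.absNorm I < (⌊z⌋₊ + 1) ^ d := by
    have h1 : z ^ d < ((⌊z⌋₊ + 1 : ℕ) : ℝ) ^ d := by
      refine pow_lt_pow_left₀ ?_ hz0 hd0.ne'
      push_cast
      exact Nat.lt_floor_add_one z
    rw [← hzN] at h1
    exact_mod_cast h1
  have hfl : (⌊z⌋₊ : ℝ) ≤ z := Nat.floor_le hz0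
  obtain ⟨hup, hlo⟩ := hC w y ⌊z⌋₊ I hI ht
  have hy' : (0 : ℝ) < y := by exact_mod_cast hy
  set u := z / y with hu
  have hu0 : 0 ≤ u := by positivity
  have huD : u ≤ D := by rw [hu, div_le_iff₀ hy']; exact hID
  have hzu : z = y * u := by rw [hu]; field_simp
  have hC0 : (0 : ℝ) ≤ C := C.cast_nonneg
  have hpow1 : 1 ≤ (1 + C * D) ^ (d - 1) := one_le_pow₀ (by nlinarith [mul_nonneg hC0 hD])
  have hup' : (boxCount w y I : ℝ) * Ideal.absNorm I ≤ y ^ d * (1 + C * u) ^ d := by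
    have h1 : (boxCount w y I : ℝ) * Ideal.absNorm I ≤ ((y + C * ⌊z⌋₊ : ℕ) : ℝ) ^ d := by
      exact_mod_cast hup
    refine h1.trans ?_
    rw [← mul_pow]
    refine pow_le_pow_left₀ (by positivity) ?_ _
    push_cast
    have : (C : ℝ) * ⌊z⌋₊ ≤ C * z := mul_le_mul_of_nonneg_left hfl hC0
    have hCz : C * z = y * (C * u) := by rw [hzu]; ring
    linarith
  have hpowup : (1 + C * u) ^ d ≤ 1 + d * C * (1 + C * D) ^ (d - 1) * u := by
    have hb := one_add_mul_le_pow (a := -(C * u / (1 + C * u))) (n := d) (by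
      have : C * u / (1 + C * u) ≤ 1 := by
        rw [div_le_one (by positivity)]; linarith
      linarith)
    have hpos : (0 : ℝ) < 1 + C * u := by positivity
    have he : 1 + -(C * u / (1 + C * u)) = 1 / (1 + C * u) := by field_simp; ring
    rw [he, one_div, inv_pow] at hb
    have h2 : (1 + C * u) ^ d * (1 + d * -(C * u / (1 + C * u))) ≤ 1 := by
      calc _ ≤ (1 + C * u) ^ d * ((1 + C * u) ^ d)⁻¹ :=
            mul_le_mul_of_nonneg_left hb (by positivity)
        _ = 1 := mul_inv_cancel₀ (by positivity)
    obtain ⟨e, he'⟩ : ∃ e, d = e + 1 := ⟨d - 1, by omega⟩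
    have h3 : (1 + C * u) ^ d * (d * (C * u / (1 + C * u))) =
        d * C * (1 + C * u) ^ (d - 1) * u := by
      rw [he', pow_succ]
      simp only [Nat.add_sub_cancel]
      field_simp
    have h4 : d * C * (1 + C * u) ^ (d - 1) * u ≤ d * C * (1 + C * D) ^ (d - 1) * u := by
      gcongr
    nlinarith
  have hlo' : (y : ℝ) ^ d * (1 - d * C * (1 + C * D) ^ (d - 1) * u) ≤
      (boxCount w y I : ℝ) * Ideal.absNorm I := by
    have h5 : d * C * u ≤ d * C * (1 + C * D) ^ (d - 1) * u := by
      have : 0 ≤ d * C * u := by positivity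
      nlinarith
    by_cases hcu : C * u ≤ 1
    · have h1 : ((y - C * ⌊z⌋₊ : ℕ) : ℝ) ^ d ≤ (boxCount w y I : ℝ) * Ideal.absNorm I := by
        exact_mod_cast hlo
      refine le_trans ?_ h1
      have h2 : (y : ℝ) - C * z ≤ ((y - C * ⌊z⌋₊ : ℕ) : ℝ) := by
        have h3 : (y : ℝ) ≤ ((y - C * ⌊z⌋₊ : ℕ) : ℝ) + C * ⌊z⌋₊ := by
          exact_mod_cast (by omega : y ≤ (y - C * ⌊z⌋₊) + C * ⌊z⌋₊)
        have : (C : ℝ) * ⌊z⌋₊ ≤ C * z := mul_le_mul_of_nonneg_left hfl hC0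
        linarith
      have h6 : (y : ℝ) - C * z = y * (1 + -(C * u)) := by rw [hu]; field_simp; ring
      rw [h6] at h2
      refine le_trans ?_ (pow_le_pow_left₀ (mul_nonneg hy'.le (by linarith)) h2 d)
      rw [mul_pow]
      refine mul_le_mul_of_nonneg_left ?_ (by positivity)
      have := one_add_mul_le_pow (a := -(C * u)) (n := d) (by linarith)
      linarith
    · refine le_trans ?_ (by positivity)
      refine mul_nonpos_of_nonneg_of_nonpos (by positivity) ?_
      have : (1 : ℝ) ≤ d := by exact_mod_cast hd0
      nlinarith
  rw [abs_le]
  constructor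
  · linarith
  · have := mul_le_mul_of_nonneg_left hpowup (by positivity : (0 : ℝ) ≤ (y : ℝ) ^ d)
    linarith

theorem absNorm_span_eq_prod_norm (a : 𝓞 K) :
    (Ideal.absNorm (Ideal.span {a}) : ℝ) = ∏ σ : K →ₐ[ℚ] ℂ, ‖σ (algebraMap (𝓞 K) K a)‖ := by
  rw [← norm_prod, ← Algebra.norm_eq_prod_embeddings ℚ ℂ, Ideal.absNorm_span_singleton]
  have h : algebraMap ℚ ℂ (Algebra.norm ℚ (algebraMap (𝓞 K) K a)) =
      ((Algebra.norm ℤ a : ℤ) : ℂ) := by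
    rw [← Algebra.coe_norm_int]
    simp
  rw [h, Complex.norm_intCast, Nat.cast_natAbs, Int.cast_abs]

theorem absNorm_span_le_pow {a : 𝓞 K} {B : ℝ}
    (h : ∀ σ : K →ₐ[ℚ] ℂ, ‖σ (algebraMap (𝓞 K) K a)‖ ≤ B) :
    (Ideal.absNorm (Ideal.span {a}) : ℝ) ≤ B ^ Module.finrank ℚ K := by
  rw [absNorm_span_eq_prod_norm, ← AlgHom.card ℚ K ℂ, ← Finset.card_univ, ← Finset.prod_const]
  exact Finset.prod_le_prod (fun _ _ => norm_nonneg _) fun σ _ => h σ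

theorem pow_le_absNorm_span {a : 𝓞 K} {B : ℝ} (hB : 0 ≤ B)
    (h : ∀ σ : K →ₐ[ℚ] ℂ, B ≤ ‖σ (algebraMap (𝓞 K) K a)‖) :
    B ^ Module.finrank ℚ K ≤ (Ideal.absNorm (Ideal.span {a}) : ℝ) := by
  rw [absNorm_span_eq_prod_norm, ← AlgHom.card ℚ K ℂ, ← Finset.card_univ, ← Finset.prod_const]
  exact Finset.prod_le_prod (fun _ _ => hB) fun σ _ => h σ

variable (K) in
/-- Elements of a suitably translated box all have norm comparable to the volume of the box. -/
theorem exists_translate_absNorm_bounds : ∃ c : ℕ, 0 < c ∧ ∀ y : ℕ, ∀ v ∈ coordBox K 0 y,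
    y ^ Module.finrank ℚ K ≤
      Ideal.absNorm (Ideal.span {((c * y : ℕ) : 𝓞 K) + (RingOfIntegers.basis K).equivFun.symm v}) ∧
    Ideal.absNorm (Ideal.span {((c * y : ℕ) : 𝓞 K) + (RingOfIntegers.basis K).equivFun.symm v}) ≤
      (2 * c * y) ^ Module.finrank ℚ K := by
  set b := RingOfIntegers.basis K
  let H : ℝ := ∑ σ : K →ₐ[ℚ] ℂ, ∑ i, ‖σ (algebraMap (𝓞 K) K (b i))‖
  have hH0 : 0 ≤ H := by positivity
  refine ⟨⌈H⌉₊ + 1, by omega, fun y v hv => ?_⟩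
  have hc : H + 1 ≤ ((⌈H⌉₊ + 1 : ℕ) : ℝ) := by
    push_cast
    linarith [Nat.le_ceil H]
  generalize ⌈H⌉₊ + 1 = c at hc
  have hsmall : ∀ σ : K →ₐ[ℚ] ℂ, ‖σ (algebraMap (𝓞 K) K (b.equivFun.symm v))‖ ≤ H * y := by
    intro σ
    rw [Module.Basis.equivFun_symm_apply, map_sum, map_sum]
    calc ‖∑ i, σ (algebraMap (𝓞 K) K (v i • b i))‖
        ≤ ∑ i, ‖σ (algebraMap (𝓞 K) K (v i • b i))‖ := norm_sum_le _ _
      _ ≤ ∑ i, ‖σ (algebraMap (𝓞 K) K (b i))‖ * y := by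
          refine Finset.sum_le_sum fun i _ => ?_
          rw [map_zsmul, map_zsmul, zsmul_eq_mul, norm_mul, Complex.norm_intCast, mul_comm]
          refine mul_le_mul_of_nonneg_left ?_ (norm_nonneg _)
          have h1 := mem_coordBox.1 hv i
          have : |v i| ≤ y := by rw [abs_le]; omega
          exact_mod_cast this
      _ = (∑ i, ‖σ (algebraMap (𝓞 K) K (b i))‖) * y := by rw [Finset.sum_mul]
      _ ≤ H * y := by
          refine mul_le_mul_of_nonneg_right ?_ (by positivity)
          exact Finset.single_le_sum (f := fun σ : K →ₐ[ℚ] ℂ =>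
            ∑ i, ‖σ (algebraMap (𝓞 K) K (b i))‖) (fun _ _ => by positivity) (Finset.mem_univ σ)
  have hy : (0 : ℝ) ≤ y := y.cast_nonneg
  have hshift : ∀ σ : K →ₐ[ℚ] ℂ, ‖σ (algebraMap (𝓞 K) K ((c * y : ℕ) : 𝓞 K))‖ = c * y := by
    intro σ
    rw [map_natCast, map_natCast, Complex.norm_natCast]
    push_cast
    rfl
  have hHy : H * y + y ≤ c * y := by nlinarith
  constructor
  · have := pow_le_absNorm_span (a := ((c * y : ℕ) : 𝓞 K) + b.equivFun.symm v) hy (fun σ => by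
      rw [map_add, map_add]
      have h1 := norm_sub_le_norm_add (σ (algebraMap (𝓞 K) K ((c * y : ℕ) : 𝓞 K)))
        (σ (algebraMap (𝓞 K) K (b.equivFun.symm v)))
      rw [hshift σ] at h1
      linarith [hsmall σ])
    exact_mod_cast this
  · have := absNorm_span_le_pow (a := ((c * y : ℕ) : 𝓞 K) + b.equivFun.symm v)
      (B := 2 * c * y) (fun σ => by
      rw [map_add, map_add]
      have h1 := norm_add_le (σ (algebraMap (𝓞 K) K ((c * y : ℕ) : 𝓞 K)))
        (σ (algebraMap (𝓞 K) K (b.equivFun.symm v)))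
      rw [hshift σ] at h1
      linarith [hsmall σ])
    exact_mod_cast this

theorem sum_Icc_two_inv_pow_le {x : ℝ} (hx : 2 ≤ x) (n : ℕ) :
    ∑ k ∈ Finset.Icc 2 n, 1 / x ^ k ≤ 2 * (1 / x ^ 2) := by
  have hx0 : 0 < x := by linarith
  rcases lt_or_ge n 2 with hn | hn
  · rw [Finset.Icc_eq_empty_of_lt hn, Finset.sum_empty]
    positivity
  have key : ∑ k ∈ Finset.Icc 2 n, 1 / x ^ k + 1 / x ^ n ≤ 2 * (1 / x ^ 2) := by
    induction n, hn using Nat.le_induction with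
    | base => simp [two_mul]
    | succ n hn ih =>
      rw [Finset.sum_Icc_succ_top (by omega)]
      have h : 2 * (1 / x ^ (n + 1)) ≤ 1 / x ^ n := by
        rw [pow_succ, mul_one_div, div_le_div_iff₀ (by positivity) (by positivity), one_mul,
          mul_comm]
        exact mul_le_mul_of_nonneg_left hx (by positivity)
      linarith
  have : 0 ≤ 1 / x ^ n := by positivity
  linarith

theorem sum_log_absNorm_box {w : 𝓞 K} {y X : ℕ}
    (hw : ∀ v ∈ coordBox K 0 y, w + (RingOfIntegers.basis K).equivFun.symm v ≠ 0 ∧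
      Ideal.absNorm (Ideal.span {w + (RingOfIntegers.basis K).equivFun.symm v}) ≤ X) :
    ∑ v ∈ coordBox K 0 y,
        Real.log (Ideal.absNorm (Ideal.span {w + (RingOfIntegers.basis K).equivFun.symm v})) =
      ∑ P ∈ primeIdealsLE K X, Real.log (Ideal.absNorm P) *
        ∑ k ∈ Finset.Icc 1 X, (boxCount w y (P ^ k) : ℝ) := by
  classical
  rw [Finset.sum_congr rfl fun v hv => log_absNorm_eq_sum
    (by rw [Ne, Ideal.span_singleton_eq_bot]; exact (hw v hv).1) (hw v hv).2]
  rw [Finset.sum_comm]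
  refine Finset.sum_congr rfl fun P _ => ?_
  rw [← Finset.mul_sum, Finset.sum_comm]
  congr 1
  refine Finset.sum_congr rfl fun k _ => ?_
  rw [boxCount, Finset.sum_boole]
  simp only [Ideal.dvd_span_singleton]

variable (K) in
/-- The first theorem of Mertens for prime ideals, along a sequence of `d`-th powers. -/
theorem exists_mertens_bound : ∃ (B : ℕ) (E : ℝ), 0 < B ∧ ∀ y : ℕ, 0 < y →
    |∑ P ∈ primeIdealsLE K (B * y ^ Module.finrank ℚ K),
        Real.log (Ideal.absNorm P) / Ideal.absNorm P - Module.finrank ℚ K * Real.log y| ≤ E := by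
  obtain ⟨c, hc0, hc⟩ := exists_translate_absNorm_bounds K
  obtain ⟨C, hC0, hC⟩ := boxCount_asymptotic (K := K) (2 * c) (by positivity)
  set d := Module.finrank ℚ K with hd
  have hd0 : 0 < d := Module.finrank_pos
  have hd0' : (d : ℝ) ≠ 0 := by exact_mod_cast hd0.ne'
  set L : ℝ := d * Real.log 4 with hL
  have hL0 : 0 ≤ L := mul_nonneg (Nat.cast_nonneg _) (Real.log_nonneg (by norm_num))
  set C5 : ℝ := 1 + C * (2 * c) with hC5
  have hC50 : 0 ≤ C5 := by positivity
  refine ⟨(2 * c) ^ d, C * L * d * (2 * c) + 4 * C5 * L + Real.log ((2 * c) ^ d), by positivity,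
    fun y hy => ?_⟩
  have hy' : (0 : ℝ) < y := by exact_mod_cast hy
  have hc0' : (0 : ℝ) < c := by exact_mod_cast hc0
  set X : ℕ := (2 * c) ^ d * y ^ d with hX
  set w : 𝓞 K := ((c * y : ℕ) : 𝓞 K) with hw
  set Y : ℝ := (y : ℝ) ^ d with hY
  have hY0 : 0 < Y := by positivity
  have hXroot : (X : ℝ) ^ ((1 : ℝ) / d) = 2 * c * y := by
    have : (X : ℝ) = (2 * c * y) ^ d := by rw [hX]; push_cast; ring
    rw [this, ← Real.rpow_natCast, ← Real.rpow_mul (by positivity), mul_one_div_cancel hd0',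
      Real.rpow_one]
  have hbox : ∀ v ∈ coordBox K 0 y, w + (RingOfIntegers.basis K).equivFun.symm v ≠ 0 ∧
      Ideal.absNorm (Ideal.span {w + (RingOfIntegers.basis K).equivFun.symm v}) ≤ X := by
    intro v hv
    obtain ⟨h1, h2⟩ := hc y v hv
    refine ⟨fun h0 => ?_, ?_⟩
    · rw [hw] at h0
      rw [h0] at h1
      have h3 : 0 < y ^ d := by positivity
      simp at h1
      omega
    · rwa [hX, ← mul_pow]
  have hT := sum_log_absNorm_box hbox
  set T := ∑ v ∈ coordBox K 0 y,
        Real.log (Ideal.absNorm (Ideal.span {w + (RingOfIntegers.basis K).equivFun.symm v}))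
    with hTdef
  have hcard : ((coordBox K 0 y).card : ℝ) = Y := by
    rw [card_coordBox]
    simp [hY, hd]
  have hTlo : Y * (d * Real.log y) ≤ T := by
    rw [← hcard, ← nsmul_eq_mul]
    refine Finset.card_nsmul_le_sum _ _ _ fun v hv => ?_
    rw [← Real.log_pow]
    refine Real.log_le_log (by positivity) ?_
    exact_mod_cast (hc y v hv).1
  have hThi : T ≤ Y * (d * Real.log y + Real.log ((2 * c) ^ d)) := by
    rw [← hcard, ← nsmul_eq_mul]
    refine Finset.sum_le_card_nsmul _ _ _ fun v hv => ?_
    rw [← Real.log_pow, ← Real.log_mul (by positivity) (by positivity)]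
    refine Real.log_le_log ?_ ?_
    · have h1 := (hc y v hv).1
      have h3 : 0 < y ^ d := by positivity
      exact_mod_cast h3.trans_le h1
    · rw [mul_comm]
      exact_mod_cast (hbox v hv).2
  -- Upper bound for the number of box elements in a prime power
  have hpow : ∀ P : Ideal (𝓞 K), Prime P → ∀ k : ℕ,
      (boxCount w y (P ^ k) : ℝ) ≤ C5 * Y * (1 / (Ideal.absNorm P : ℝ) ^ k) := by
    intro P hP k
    have hN2 := two_le_absNorm_of_prime hP
    have hNpos : (0 : ℝ) < (Ideal.absNorm P : ℝ) ^ k := by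
      have : 0 < Ideal.absNorm P := by omega
      positivity
    by_cases hk : Ideal.absNorm (P ^ k) ≤ X
    · have hroot : (Ideal.absNorm (P ^ k) : ℝ) ^ ((1 : ℝ) / d) ≤ 2 * c * y := by
        rw [← hXroot]
        exact Real.rpow_le_rpow (by positivity) (by exact_mod_cast hk) (by positivity)
      have h1 := hC w y (P ^ k) hy (pow_ne_zero k hP.ne_zero) hroot
      have h2 : (Ideal.absNorm (P ^ k) : ℝ) ^ ((1 : ℝ) / d) / y ≤ 2 * c := by
        rwa [div_le_iff₀ hy']
      have h3 := (abs_le.1 h1).2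
      have h4 : C * (Y * ((Ideal.absNorm (P ^ k) : ℝ) ^ ((1 : ℝ) / d) / y)) ≤
          C * (Y * (2 * c)) := by
        gcongr
      rw [mul_one_div, le_div_iff₀ hNpos]
      have h5 : (Ideal.absNorm (P ^ k) : ℝ) = (Ideal.absNorm P : ℝ) ^ k := by
        rw [map_pow]; push_cast; rfl
      rw [← h5, hC5]
      linarith
    · have h0 : boxCount w y (P ^ k) = 0 := by
        classical
        rw [boxCount, Finset.card_eq_zero, Finset.filter_eq_empty_iff]
        intro v hv hmem
        refine hk (le_trans (Nat.le_of_dvd (Nat.pos_of_ne_zero ?_)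
          (map_dvd Ideal.absNorm (Ideal.dvd_span_singleton.2 hmem))) (hbox v hv).2)
        rw [Ne, Ideal.absNorm_eq_zero_iff, Ideal.span_singleton_eq_bot]
        exact (hbox v hv).1
      rw [h0]
      push_cast
      positivity
  have hmain : ∀ P ∈ primeIdealsLE K X,
      |∑ k ∈ Finset.Icc 1 X, (boxCount w y (P ^ k) : ℝ) - Y / Ideal.absNorm P| ≤
        C * (Y / y) * (Ideal.absNorm P : ℝ) ^ ((1 : ℝ) / d - 1) +
          2 * C5 * Y * (1 / (Ideal.absNorm P : ℝ) ^ 2) := by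
    intro P hPX
    obtain ⟨hPX, hP⟩ := mem_primeIdealsLE.1 hPX
    have hN2 := two_le_absNorm_of_prime hP
    have hN2' : (2 : ℝ) ≤ Ideal.absNorm P := by exact_mod_cast hN2
    have hN0 : (0 : ℝ) < Ideal.absNorm P := by linarith
    have hsplit : ∑ k ∈ Finset.Icc 1 X, (boxCount w y (P ^ k) : ℝ) =
        boxCount w y P + ∑ k ∈ Finset.Icc 2 X, (boxCount w y (P ^ k) : ℝ) := by
      have := Finset.sum_Ioc_add_eq_sum_Icc (f := fun k => (boxCount w y (P ^ k) : ℝ))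
        (show 1 ≤ X by omega)
      rw [← this, add_comm, pow_one]
      rfl
    have htail0 : 0 ≤ ∑ k ∈ Finset.Icc 2 X, (boxCount w y (P ^ k) : ℝ) := by positivity
    have htail : ∑ k ∈ Finset.Icc 2 X, (boxCount w y (P ^ k) : ℝ) ≤
        2 * C5 * Y * (1 / (Ideal.absNorm P : ℝ) ^ 2) := by
      calc _ ≤ ∑ k ∈ Finset.Icc 2 X, C5 * Y * (1 / (Ideal.absNorm P : ℝ) ^ k) :=
            Finset.sum_le_sum fun k _ => hpow P hP k
        _ = C5 * Y * ∑ k ∈ Finset.Icc 2 X, (1 / (Ideal.absNorm P : ℝ) ^ k) := by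
            rw [Finset.mul_sum]
        _ ≤ C5 * Y * (2 * (1 / (Ideal.absNorm P : ℝ) ^ 2)) :=
            mul_le_mul_of_nonneg_left (sum_Icc_two_inv_pow_le hN2' X) (by positivity)
        _ = _ := by ring
    have hroot : (Ideal.absNorm P : ℝ) ^ ((1 : ℝ) / d) ≤ 2 * c * y := by
      rw [← hXroot]
      exact Real.rpow_le_rpow (by positivity) (by exact_mod_cast hPX) (by positivity)
    have h1 := hC w y P hy hP.ne_zero hroot
    have h2 : |(boxCount w y P : ℝ) - Y / Ideal.absNorm P| ≤
        C * (Y / y) * (Ideal.absNorm P : ℝ) ^ ((1 : ℝ) / d - 1) := by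
      have h3 : (boxCount w y P : ℝ) - Y / Ideal.absNorm P =
          (boxCount w y P * Ideal.absNorm P - Y) / Ideal.absNorm P := by
        field_simp
      rw [h3, abs_div, abs_of_pos hN0, div_le_iff₀ hN0, Real.rpow_sub_one hN0.ne']
      refine h1.trans (le_of_eq ?_)
      rw [hY]
      field_simp
    rw [hsplit]
    rw [abs_le] at h2 ⊢
    have : 0 ≤ 2 * C5 * Y * (1 / (Ideal.absNorm P : ℝ) ^ 2) := by positivity
    constructor <;> linarith
  have hS1 : ∑ P ∈ primeIdealsLE K X,
      Real.log (Ideal.absNorm P) * (Ideal.absNorm P : ℝ) ^ ((1 : ℝ) / d - 1) ≤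
        L * (d * (2 * c * y)) := by
    have h1 := sum_log_absNorm_mul_le (K := K) (f := fun n => (n : ℝ) ^ ((1 : ℝ) / d - 1))
      (fun n hn => by
        refine Real.rpow_le_rpow_of_nonpos (by exact_mod_cast hn) (by push_cast; linarith) ?_
        rw [sub_nonpos, div_le_one (by positivity)]
        exact_mod_cast hd0) (fun n => by positivity) X
    refine h1.trans (mul_le_mul_of_nonneg_left ?_ hL0)
    rw [← hXroot]
    exact sum_rpow_le hd0 X
  have hS2 : ∑ P ∈ primeIdealsLE K X,
      Real.log (Ideal.absNorm P) * (1 / (Ideal.absNorm P : ℝ) ^ 2) ≤ L * 2 := by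
    have h1 := sum_log_absNorm_mul_le (K := K) (f := fun n => 1 / (n : ℝ) ^ 2)
      (fun n hn => by
        have hn' : (0 : ℝ) < n := by exact_mod_cast hn
        push_cast
        gcongr
        linarith) (fun n => by positivity) X
    exact h1.trans (mul_le_mul_of_nonneg_left (sum_inv_sq_le X) hL0)
  set F := ∑ P ∈ primeIdealsLE K X, Real.log (Ideal.absNorm P) / Ideal.absNorm P with hF
  have hdiff : |T - Y * F| ≤ Y * (C * L * d * (2 * c) + 4 * C5 * L) := by
    have h1 : T - Y * F = ∑ P ∈ primeIdealsLE K X, Real.log (Ideal.absNorm P) *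
        (∑ k ∈ Finset.Icc 1 X, (boxCount w y (P ^ k) : ℝ) - Y / Ideal.absNorm P) := by
      rw [hT, hF, Finset.mul_sum, ← Finset.sum_sub_distrib]
      refine Finset.sum_congr rfl fun P _ => ?_
      ring
    rw [h1]
    calc _ ≤ ∑ P ∈ primeIdealsLE K X, |Real.log (Ideal.absNorm P) *
        (∑ k ∈ Finset.Icc 1 X, (boxCount w y (P ^ k) : ℝ) - Y / Ideal.absNorm P)| :=
          Finset.abs_sum_le_sum_abs _ _
      _ ≤ ∑ P ∈ primeIdealsLE K X, (C * (Y / y) *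
            (Real.log (Ideal.absNorm P) * (Ideal.absNorm P : ℝ) ^ ((1 : ℝ) / d - 1)) +
          2 * C5 * Y * (Real.log (Ideal.absNorm P) * (1 / (Ideal.absNorm P : ℝ) ^ 2))) := by
          refine Finset.sum_le_sum fun P hP => ?_
          have hlog : 0 ≤ Real.log (Ideal.absNorm P) := Real.log_natCast_nonneg _
          rw [abs_mul, abs_of_nonneg hlog]
          refine (mul_le_mul_of_nonneg_left (hmain P hP) hlog).trans (le_of_eq ?_)
          ring
      _ ≤ C * (Y / y) * (L * (d * (2 * c * y))) + 2 * C5 * Y * (L * 2) := by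
          rw [Finset.sum_add_distrib, ← Finset.mul_sum, ← Finset.mul_sum]
          exact add_le_add (mul_le_mul_of_nonneg_left hS1 (by positivity))
            (mul_le_mul_of_nonneg_left hS2 (by positivity))
      _ = _ := by
          field_simp
          ring
  have hlogc : 0 ≤ Real.log ((2 * c) ^ d) := by
    refine Real.log_nonneg (one_le_pow₀ ?_)
    have : (1 : ℝ) ≤ c := by exact_mod_cast hc0
    linarith
  have hfin : |Y * (F - d * Real.log y)| ≤
      Y * (C * L * d * (2 * c) + 4 * C5 * L + Real.log ((2 * c) ^ d)) := by
    rw [abs_le] at hdiff ⊢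
    have := mul_nonneg hY0.le hlogc
    constructor <;> linarith
  rw [abs_mul, abs_of_pos hY0] at hfin
  exact le_of_mul_le_mul_left hfin hY0

variable (K) in
/-- A nonzero algebraic integer of norm at most `exp (c n)` avoids some prime ideal of norm
`O(n)`. -/
theorem exists_prime_notMem_absNorm_le (c : ℕ) (hc : 0 < c) : ∃ C : ℕ, 0 < C ∧ ∀ n : ℕ, 0 < n →
    ∀ a : 𝓞 K, a ≠ 0 → Real.log (Ideal.absNorm (Ideal.span {a})) ≤ c * n →
      ∃ P : Ideal (𝓞 K), Prime P ∧ a ∉ P ∧ Ideal.absNorm P ≤ C * n := by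
  obtain ⟨B, E, hB, hE⟩ := exists_mertens_bound K
  set d := Module.finrank ℚ K with hd
  have hd0 : 0 < d := Module.finrank_pos
  obtain ⟨M, hM1, hM⟩ : ∃ M : ℕ, 1 ≤ M ∧ 2 * E + 1 ≤ d * Real.log M := by
    refine ⟨⌈Real.exp (2 * E + 1)⌉₊ + 1, by omega, ?_⟩
    have h1 : 2 * E + 1 ≤ Real.log (⌈Real.exp (2 * E + 1)⌉₊ + 1 : ℕ) := by
      rw [Real.le_log_iff_exp_le (by positivity)]
      push_cast
      linarith [Nat.le_ceil (Real.exp (2 * E + 1))]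
    have h2 : 0 ≤ Real.log (⌈Real.exp (2 * E + 1)⌉₊ + 1 : ℕ) := Real.log_natCast_nonneg _
    have h3 : (1 : ℝ) ≤ d := by exact_mod_cast hd0
    nlinarith
  have htheta : ∀ y : ℕ, 0 < y → (y : ℝ) ^ d ≤
      ∑ P ∈ primeIdealsLE K (B * (M * y) ^ d), Real.log (Ideal.absNorm P) := by
    intro y hy
    have hMy : 0 < M * y := by positivity
    have h1 := (abs_le.1 (hE y hy)).2
    have h2 := (abs_le.1 (hE (M * y) hMy)).1
    have hlog : Real.log ((M * y : ℕ) : ℝ) = Real.log M + Real.log y := by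
      push_cast
      rw [Real.log_mul (by positivity) (by positivity)]
    rw [hlog] at h2
    have hsub : primeIdealsLE K (B * y ^ d) ⊆ primeIdealsLE K (B * (M * y) ^ d) := by
      intro P hP
      rw [mem_primeIdealsLE] at hP ⊢
      refine ⟨hP.1.trans ?_, hP.2⟩
      gcongr
      exact Nat.le_mul_of_pos_left _ hM1
    classical
    have h3 := Finset.sum_sdiff hsub (f := fun P => Real.log (Ideal.absNorm P) / Ideal.absNorm P)
    have h4 : 1 ≤ ∑ P ∈ primeIdealsLE K (B * (M * y) ^ d) \ primeIdealsLE K (B * y ^ d),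
        Real.log (Ideal.absNorm P) / Ideal.absNorm P := by
      linarith
    have h5 : ∑ P ∈ primeIdealsLE K (B * (M * y) ^ d) \ primeIdealsLE K (B * y ^ d),
        Real.log (Ideal.absNorm P) / Ideal.absNorm P ≤
        ∑ P ∈ primeIdealsLE K (B * (M * y) ^ d) \ primeIdealsLE K (B * y ^ d),
        Real.log (Ideal.absNorm P) / (y : ℝ) ^ d := by
      refine Finset.sum_le_sum fun P hP => ?_
      rw [Finset.mem_sdiff, mem_primeIdealsLE, mem_primeIdealsLE] at hP
      have h6 : B * y ^ d < Ideal.absNorm P := by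
        by_contra h
        exact hP.2 ⟨not_lt.1 h, hP.1.2⟩
      have h7 : y ^ d ≤ Ideal.absNorm P := (Nat.le_mul_of_pos_left _ hB).trans h6.le
      refine div_le_div_of_nonneg_left (Real.log_natCast_nonneg _) (by positivity) ?_
      exact_mod_cast h7
    rw [← Finset.sum_div] at h5
    have h8 := h4.trans h5
    rw [le_div_iff₀ (by positivity), one_mul] at h8
    refine h8.trans (Finset.sum_le_sum_of_subset_of_nonneg Finset.sdiff_subset ?_)
    exact fun P _ _ => Real.log_natCast_nonneg _
  refine ⟨B * (M ^ d * (2 ^ d * c)), by positivity, fun n hn a ha hlog => ?_⟩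
  by_contra! hcon
  have hex : ∃ y : ℕ, c * n < y ^ d :=
    ⟨c * n + 1, (Nat.lt_succ_self _).trans_le (Nat.le_self_pow hd0.ne' _)⟩
  classical
  obtain ⟨y, hy1, hy2⟩ : ∃ y : ℕ, c * n < y ^ d ∧ y ^ d ≤ 2 ^ d * (c * n) := by
    refine ⟨Nat.find hex, Nat.find_spec hex, ?_⟩
    set y := Nat.find hex
    have hspec : c * n < y ^ d := Nat.find_spec hex
    have hy2 : 2 ≤ y := by
      by_contra h
      have h1 : y ^ d ≤ 1 := (Nat.pow_le_pow_left (by omega : y ≤ 1) d).trans (by simp)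
      have : 0 < c * n := by positivity
      omega
    have hmin : (y - 1) ^ d ≤ c * n := not_lt.1 (Nat.find_min hex (by omega : y - 1 < y))
    calc y ^ d ≤ (2 * (y - 1)) ^ d := Nat.pow_le_pow_left (by omega) _
      _ = 2 ^ d * (y - 1) ^ d := mul_pow _ _ _
      _ ≤ _ := Nat.mul_le_mul_left _ hmin
  have hy0 : 0 < y := by
    rcases Nat.eq_zero_or_pos y with rfl | h
    · rw [zero_pow hd0.ne'] at hy1
      omega
    · exact h
  have hXle : B * (M * y) ^ d ≤ B * (M ^ d * (2 ^ d * c)) * n := by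
    rw [mul_pow]
    calc B * (M ^ d * y ^ d) ≤ B * (M ^ d * (2 ^ d * (c * n))) := by gcongr
      _ = _ := by ring
  have hprod := prod_absNorm_le_absNorm_span (F := primeIdealsLE K (B * (M * y) ^ d))
    (fun P hP => (mem_primeIdealsLE.1 hP).2) ha (fun P hP => by
      by_contra hmem
      obtain ⟨h1, h2⟩ := mem_primeIdealsLE.1 hP
      have := hcon P h2 hmem
      omega)
  have hpos : ∀ P ∈ primeIdealsLE K (B * (M * y) ^ d), 0 < Ideal.absNorm P := fun P hP => by
    have := two_le_absNorm_of_prime (mem_primeIdealsLE.1 hP).2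
    omega
  have h1 : ∑ P ∈ primeIdealsLE K (B * (M * y) ^ d), Real.log (Ideal.absNorm P) ≤
      Real.log (Ideal.absNorm (Ideal.span {a})) := by
    rw [← Real.log_prod fun P hP => by exact_mod_cast (hpos P hP).ne']
    refine Real.log_le_log (Finset.prod_pos fun P hP => by exact_mod_cast hpos P hP) ?_
    exact_mod_cast hprod
  have h2 := htheta y hy0
  have h3 : (c * n : ℝ) < (y : ℝ) ^ d := by exact_mod_cast hy1
  linarith

end PrimeIdealCounting

section PropertyA

open NumberField

theorem card_specialLinearGroup_le (F : Type*) [Field F] [Finite F] {m : ℕ} (hm : 0 < m) :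
    Nat.card (Matrix.SpecialLinearGroup (Fin m) F) ≤ Nat.card F ^ (m ^ 2 - 1) := by
  classical
  have := Fintype.ofFinite F
  obtain ⟨k, rfl⟩ : ∃ k, m = k + 1 := ⟨m - 1, by omega⟩
  set q := Nat.card F with hq
  have hq1 : 1 < q := Finite.one_lt_card
  let f : Matrix.SpecialLinearGroup (Fin (k + 1)) F × Fˣ →
      Matrix.GeneralLinearGroup (Fin (k + 1)) F :=
    fun p => Matrix.GeneralLinearGroup.mkOfDetNeZero
      (Matrix.diagonal (Fin.cons (p.2 : F) 1) * (p.1 : Matrix (Fin (k + 1)) (Fin (k + 1)) F))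
      (by simp [Matrix.det_diagonal, Fin.prod_univ_succ])
  have hf : Function.Injective f := by
    rintro ⟨A, u⟩ ⟨B, w⟩ h
    have h1 : Matrix.diagonal (Fin.cons (u : F) 1) * (A : Matrix (Fin (k + 1)) (Fin (k + 1)) F) =
        Matrix.diagonal (Fin.cons (w : F) 1) * (B : Matrix (Fin (k + 1)) (Fin (k + 1)) F) :=
      congrArg Units.val h
    have h2 : (u : F) = w := by
      simpa [Matrix.det_diagonal, Fin.prod_univ_succ] using congrArg Matrix.det h1
    rw [← h2] at h1
    have h3 : IsUnit (Matrix.diagonal (Fin.cons (u : F) 1) :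
        Matrix (Fin (k + 1)) (Fin (k + 1)) F) := by
      rw [Matrix.isUnit_iff_isUnit_det]
      simp [Matrix.det_diagonal, Fin.prod_univ_succ]
    exact Prod.ext (Subtype.ext (h3.mul_left_cancel h1)) (Units.ext h2)
  have hcard := Nat.card_le_card_of_injective f hf
  rw [Nat.card_prod, Nat.card_units, Matrix.card_GL_field, ← Nat.card_eq_fintype_card, ← hq,
    Fin.prod_univ_castSucc] at hcard
  have h1 : ∏ i : Fin k, (q ^ (k + 1) - q ^ (i.castSucc : ℕ)) ≤ (q ^ (k + 1)) ^ k := by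
    refine (Finset.prod_le_pow_card _ _ (q ^ (k + 1)) fun i _ => Nat.sub_le _ _).trans ?_
    simp
  have h2 : q ^ (k + 1) - q ^ ((Fin.last k : Fin (k + 1)) : ℕ) = q ^ k * (q - 1) := by
    rw [Fin.val_last, pow_succ, Nat.mul_sub, mul_one]
  rw [h2] at hcard
  have h3 : (k + 1) ^ 2 - 1 = (k + 1) * k + k := by
    rw [Nat.sub_eq_iff_eq_add (Nat.one_le_pow _ _ (by omega))]
    ring
  have h4 := hcard.trans (Nat.mul_le_mul_right _ h1)
  rw [← mul_assoc, ← pow_mul, ← pow_add, ← h3] at h4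
  exact Nat.le_of_mul_le_mul_right h4 (by omega)

variable {K : Type*} [Field K] [NumberField K]

/-- Reduction of `S`-integers modulo a prime outside `S`. -/
theorem exists_integer_hom_residue
    {S : Set (IsDedekindDomain.HeightOneSpectrum (𝓞 K))}
    {v : IsDedekindDomain.HeightOneSpectrum (𝓞 K)} (hv : v ∉ S) :
    ∃ φ : S.integer K →+* 𝓞 K ⧸ v.asIdeal,
      ∀ a : 𝓞 K, φ (algebraMap (𝓞 K) (S.integer K) a) = Ideal.Quotient.mk v.asIdeal a := by
  let O := IsDedekindDomain.HeightOneSpectrum.valuationSubringAtPrime K v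
  have hmax := v.isMaximal
  let _ := Ideal.Quotient.field v.asIdeal
  have hunit : ∀ y : v.asIdeal.primeCompl, IsUnit (Ideal.Quotient.mk v.asIdeal (y : 𝓞 K)) := by
    intro y
    rw [isUnit_iff_ne_zero, Ne, Ideal.Quotient.eq_zero_iff_mem]
    exact y.2
  let ψ : O →+* 𝓞 K ⧸ v.asIdeal := IsLocalization.lift hunit
  have hmem : ∀ x : S.integer K, (x : K) ∈ O := by
    intro x
    change (x : K) ∈ IsDedekindDomain.HeightOneSpectrum.valuationSubringAtPrime K v
    rw [IsDedekindDomain.HeightOneSpectrum.valuationSubringAtPrime_eq_valuationSubring]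
    exact S.integer_valuation_le_one K x hv
  let ι : S.integer K →+* O := (algebraMap (S.integer K) K).codRestrict O.toSubring hmem
  refine ⟨ψ.comp ι, fun a => ?_⟩
  have h : ι (algebraMap (𝓞 K) (S.integer K) a) = algebraMap (𝓞 K) O a := Subtype.ext rfl
  rw [RingHom.comp_apply, h]
  exact IsLocalization.lift_eq hunit a

theorem exists_forall_norm_embedding_le (T : Finset K) :
    ∃ H : ℝ, 1 ≤ H ∧ ∀ a ∈ T, ∀ σ : K →ₐ[ℚ] ℂ, ‖σ a‖ ≤ H := by
  refine ⟨1 + ∑ a ∈ T, ∑ σ : K →ₐ[ℚ] ℂ, ‖σ a‖, ?_, fun a ha σ => ?_⟩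
  · have : 0 ≤ ∑ a ∈ T, ∑ σ : K →ₐ[ℚ] ℂ, ‖σ a‖ := by positivity
    linarith
  · have h1 : ‖σ a‖ ≤ ∑ σ : K →ₐ[ℚ] ℂ, ‖σ a‖ :=
      Finset.single_le_sum (f := fun σ : K →ₐ[ℚ] ℂ => ‖σ a‖) (fun _ _ => norm_nonneg _)
        (Finset.mem_univ σ)
    have h2 : ∑ σ : K →ₐ[ℚ] ℂ, ‖σ a‖ ≤ ∑ a ∈ T, ∑ σ : K →ₐ[ℚ] ℂ, ‖σ a‖ :=
      Finset.single_le_sum (f := fun a => ∑ σ : K →ₐ[ℚ] ℂ, ‖σ a‖)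
        (fun _ _ => by positivity) ha
    linarith

theorem exists_integral_matrix_list_prod {m : ℕ} (D : 𝓞 K) {H : ℝ} (hH : 1 ≤ H)
    (hD : ∀ σ : K →ₐ[ℚ] ℂ, ‖σ (algebraMap (𝓞 K) K D)‖ ≤ H) (n : ℕ)
    (l : List (Matrix (Fin m) (Fin m) K))
    (hl : ∀ A ∈ l, ∃ M : Matrix (Fin m) (Fin m) (𝓞 K),
      M.map (algebraMap (𝓞 K) K) = algebraMap (𝓞 K) K D • A ∧
        ∀ (σ : K →ₐ[ℚ] ℂ) (i j), ‖σ (algebraMap (𝓞 K) K (M i j))‖ ≤ H)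
    (hn : l.length ≤ n) :
    ∃ M : Matrix (Fin m) (Fin m) (𝓞 K),
      M.map (algebraMap (𝓞 K) K) = algebraMap (𝓞 K) K D ^ n • l.prod ∧
        ∀ (σ : K →ₐ[ℚ] ℂ) (i j), ‖σ (algebraMap (𝓞 K) K (M i j))‖ ≤ (m * H) ^ n := by
  have hH0 : 0 ≤ H := by linarith
  induction n generalizing l with
  | zero =>
    obtain rfl : l = [] := List.length_eq_zero_iff.1 (by omega)
    refine ⟨1, by simp, fun σ i j => ?_⟩
    rw [Matrix.one_apply]
    split_ifs <;> simp
  | succ n ih =>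
    cases l with
    | nil =>
      refine ⟨D ^ (n + 1) • 1, ?_, fun σ i j => ?_⟩
      · ext i j
        rw [Matrix.map_apply, Matrix.smul_apply, Matrix.one_apply, List.prod_nil,
          Matrix.smul_apply, Matrix.one_apply]
        split_ifs <;> simp
      · have hm : (1 : ℝ) ≤ m := by exact_mod_cast i.pos
        rw [Matrix.smul_apply, Matrix.one_apply]
        split_ifs
        · simp only [smul_eq_mul, mul_one, map_pow, norm_pow]
          refine pow_le_pow_left₀ (norm_nonneg _) ((hD σ).trans ?_) _
          exact le_mul_of_one_le_left hH0 hm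
        · simp only [smul_zero, map_zero, norm_zero]
          positivity
    | cons A t =>
      obtain ⟨M, hM, hMn⟩ := hl A (by simp)
      obtain ⟨N, hN, hNn⟩ := ih t (fun B hB => hl B (by simp [hB])) (by simpa using hn)
      refine ⟨M * N, ?_, fun σ i j => ?_⟩
      · rw [Matrix.map_mul, hM, hN, List.prod_cons, smul_mul_smul_comm, pow_succ']
      · simp only [Matrix.mul_apply, map_sum]
        calc _ ≤ ∑ k : Fin m, H * (m * H) ^ n := by
              refine norm_sum_le_of_le _ fun k _ => ?_
              rw [map_mul, map_mul, norm_mul]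
              exact mul_le_mul (hMn σ i k) (hNn σ k j) (norm_nonneg _) hH0
          _ = _ := by
              simp
              ring

theorem exists_common_denominator {S : Set (IsDedekindDomain.HeightOneSpectrum (𝓞 K))}
    (hS : S.Finite) (T : Finset K) :
    ∃ D : 𝓞 K, D ≠ 0 ∧ (∀ v ∈ S, D ∈ v.asIdeal) ∧
      ∀ a ∈ T, ∃ b : 𝓞 K, algebraMap (𝓞 K) K b = algebraMap (𝓞 K) K D * a := by
  obtain ⟨b, hb⟩ := IsLocalization.exist_integer_multiples_of_finset (nonZeroDivisors (𝓞 K)) T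
  have hne : ∏ v ∈ hS.toFinset, v.asIdeal ≠ ⊥ :=
    Finset.prod_ne_zero_iff.2 fun v _ => v.ne_bot
  obtain ⟨e, he, he0⟩ := Submodule.exists_mem_ne_zero_of_ne_bot hne
  refine ⟨e * b, mul_ne_zero he0 (nonZeroDivisors.ne_zero b.2), fun v hv => ?_, fun a ha => ?_⟩
  · refine Ideal.mul_mem_right _ _ (Ideal.le_of_dvd ?_ he)
    exact Finset.dvd_prod_of_mem (fun v => v.asIdeal) (hS.mem_toFinset.2 hv)
  · obtain ⟨x, hx⟩ := hb a ha
    refine ⟨e * x, ?_⟩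
    rw [map_mul, hx, map_mul, mul_assoc, Algebra.smul_def]

/-- After clearing denominators, a difference of traces of elements of word length at most `n` is
an algebraic integer whose norm is at most exponential in `n`. -/
theorem exists_integral_trace_sub {Γ : Type*} [Group Γ] (X : Finset Γ)
    {S : Set (IsDedekindDomain.HeightOneSpectrum (𝓞 K))} (hS : S.Finite) {m : ℕ}
    (ρ : Γ →* Matrix.SpecialLinearGroup (Fin m) (S.integer K)) :
    ∃ D : 𝓞 K, D ≠ 0 ∧ (∀ v ∈ S, D ∈ v.asIdeal) ∧ ∃ c : ℕ, 0 < c ∧ ∀ n : ℕ, 0 < n →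
      ∀ γ η : Γ, inBall X n γ → inBall X n η → ∃ a : 𝓞 K, D ∣ a ∧
        algebraMap (𝓞 K) (S.integer K) a = algebraMap (𝓞 K) (S.integer K) D ^ (n + 1) *
          (Matrix.trace (ρ γ : Matrix (Fin m) (Fin m) (S.integer K)) -
            Matrix.trace (ρ η : Matrix (Fin m) (Fin m) (S.integer K))) ∧
        Real.log (Ideal.absNorm (Ideal.span {a})) ≤ c * n := by
  classical
  let ι : S.integer K →+* K := algebraMap (S.integer K) K
  have hι : Function.Injective ι := Subtype.val_injective
  let r : Γ →* Matrix (Fin m) (Fin m) K :=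
    (ι.mapMatrix.toMonoidHom).comp (Matrix.SpecialLinearGroup.coeMonoidHom.comp ρ)
  let G := X ∪ X.image (·⁻¹)
  let T : Finset K := (G ×ˢ (Finset.univ : Finset (Fin m × Fin m))).image
    fun p => r p.1 p.2.1 p.2.2
  obtain ⟨D, hD0, hDS, hDT⟩ := exists_common_denominator hS T
  let D' := algebraMap (𝓞 K) K D
  obtain ⟨H, hH1, hH⟩ := exists_forall_norm_embedding_le (insert D' (T.image (D' * ·)))
  have hgen : ∀ x ∈ G, ∃ M : Matrix (Fin m) (Fin m) (𝓞 K),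
      M.map (algebraMap (𝓞 K) K) = D' • r x ∧
        ∀ (σ : K →ₐ[ℚ] ℂ) (i j), ‖σ (algebraMap (𝓞 K) K (M i j))‖ ≤ H := by
    intro x hx
    have hxT : ∀ i j, r x i j ∈ T := fun i j =>
      Finset.mem_image.2 ⟨(x, i, j), by simp [hx], rfl⟩
    choose M hM using fun i j => hDT _ (hxT i j)
    refine ⟨Matrix.of M, Matrix.ext hM, fun σ i j => ?_⟩
    rw [Matrix.of_apply, hM]
    exact hH _ (Finset.mem_insert_of_mem (Finset.mem_image_of_mem _ (hxT i j))) σ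
  have hball : ∀ (n : ℕ) (γ : Γ), inBall X n γ → ∃ M : Matrix (Fin m) (Fin m) (𝓞 K),
      M.map (algebraMap (𝓞 K) K) = D' ^ n • r γ ∧
        ∀ (σ : K →ₐ[ℚ] ℂ) (i j), ‖σ (algebraMap (𝓞 K) K (M i j))‖ ≤ (m * H) ^ n := by
    rintro n γ ⟨l, hl, hln, rfl⟩
    rw [map_list_prod]
    refine exists_integral_matrix_list_prod D hH1 (hH _ (Finset.mem_insert_self _ _)) n _
      (fun A hA => ?_) (by simpa using hln)
    obtain ⟨x, hx, rfl⟩ := List.mem_map.1 hA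
    refine hgen x ?_
    rcases hl x hx with h | h
    · exact Finset.mem_union_left _ h
    · exact Finset.mem_union_right _ (Finset.mem_image.2 ⟨_, h, inv_inv x⟩)
  let d := Module.finrank ℚ K
  let B : ℝ := H * ((2 * m + 1) * (m * H + 1))
  have hmH : 0 ≤ m * H := by positivity
  have hm2 : (1 : ℝ) ≤ 2 * m + 1 := by linarith [(Nat.cast_nonneg m : (0 : ℝ) ≤ m)]
  have htrace : ∀ (M : Matrix (Fin m) (Fin m) (𝓞 K)) (C : ℝ) (σ : K →ₐ[ℚ] ℂ),
      (∀ i j, ‖σ (algebraMap (𝓞 K) K (M i j))‖ ≤ C) →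
        ‖σ (algebraMap (𝓞 K) K M.trace)‖ ≤ m * C := by
    intro M C σ hM
    simp only [Matrix.trace, Matrix.diag_apply, map_sum]
    refine (norm_sum_le_of_le _ fun i _ => hM i i).trans ?_
    simp
  refine ⟨D, hD0, hDS, ⌈d * Real.log B⌉₊ + 1, by omega, fun n hn γ η hγ hη => ?_⟩
  obtain ⟨M, hM, hMn⟩ := hball n γ hγ
  obtain ⟨N, hN, hNn⟩ := hball n η hη
  refine ⟨D * (M.trace - N.trace), dvd_mul_right _ _, hι ?_, ?_⟩
  · have htr : ∀ g : Γ, ι (Matrix.trace (ρ g : Matrix (Fin m) (Fin m) (S.integer K))) =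
        (r g).trace := fun g => AddMonoidHom.map_trace ι.toAddMonoidHom _
    have hMtr : algebraMap (𝓞 K) K M.trace = D' ^ n * (r γ).trace := by
      rw [← smul_eq_mul, ← Matrix.trace_smul, ← hM]
      exact AddMonoidHom.map_trace (algebraMap (𝓞 K) K).toAddMonoidHom _
    have hNtr : algebraMap (𝓞 K) K N.trace = D' ^ n * (r η).trace := by
      rw [← smul_eq_mul, ← Matrix.trace_smul, ← hN]
      exact AddMonoidHom.map_trace (algebraMap (𝓞 K) K).toAddMonoidHom _
    rw [map_mul ι, map_pow, map_sub ι, htr, htr]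
    change algebraMap (𝓞 K) K (D * (M.trace - N.trace)) = D' ^ (n + 1) * ((r γ).trace - (r η).trace)
    rw [map_mul, map_sub, hMtr, hNtr]
    ring
  · have hle : (Ideal.absNorm (Ideal.span {D * (M.trace - N.trace)}) : ℝ) ≤ (B ^ n) ^ d := by
      refine absNorm_span_le_pow fun σ => ?_
      rw [map_mul, map_mul, map_sub, map_sub, norm_mul]
      calc _ ≤ H * (m * (m * H) ^ n + m * (m * H) ^ n) :=
            mul_le_mul (hH _ (Finset.mem_insert_self _ _) σ) ((norm_sub_le _ _).trans
              (add_le_add (htrace M _ σ (hMn σ)) (htrace N _ σ (hNn σ)))) (norm_nonneg _)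
              (by linarith)
        _ = H * ((2 * m) * (m * H) ^ n) := by ring
        _ ≤ H ^ n * ((2 * m + 1) ^ n * (m * H + 1) ^ n) := by
            gcongr
            · exact le_self_pow₀ hH1 hn.ne'
            · refine le_trans ?_ (le_self_pow₀ hm2 hn.ne')
              linarith
            · linarith
        _ = B ^ n := by rw [← mul_pow, ← mul_pow]
    have hceil : d * Real.log B ≤ (⌈d * Real.log B⌉₊ + 1 : ℕ) := by
      push_cast
      linarith [Nat.le_ceil (d * Real.log B)]
    have hlog : Real.log ((B ^ n) ^ d) ≤ (⌈d * Real.log B⌉₊ + 1 : ℕ) * n := by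
      rw [Real.log_pow, Real.log_pow]
      calc (d : ℝ) * (n * Real.log B) = d * Real.log B * n := by ring
        _ ≤ _ := mul_le_mul_of_nonneg_right hceil (by positivity)
    rcases (Nat.cast_nonneg (α := ℝ)
      (Ideal.absNorm (Ideal.span {D * (M.trace - N.trace)}))).eq_or_lt with h0 | h0
    · rw [← h0, Real.log_zero]
      positivity
    · exact (Real.log_le_log h0 hle).trans hlog

end PropertyA

/-- If `Γ` has property (A) witnessed by `ρ : Γ → SL(m, O_S)` over a ring of `S`-integers
of a number field, then non-conjugate elements of word length at most `n` can be
separated in a finite quotient of order at most `C·n^(m²−1)`. -/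
theorem propA_polynomial_conj_complexity
    (Γ : Type*) [Group Γ] (X : Finset Γ) (hX : Subgroup.closure (X : Set Γ) = ⊤)
    (K : Type*) [Field K] [NumberField K]
    (S : Set (IsDedekindDomain.HeightOneSpectrum (NumberField.RingOfIntegers K)))
    (hS : S.Finite) (m : ℕ)
    (ρ : Γ →* Matrix.SpecialLinearGroup (Fin m) (S.integer K))
    (hA : ∀ γ η : Γ, ¬ IsConj γ η →
      Matrix.trace (↑(ρ γ) : Matrix (Fin m) (Fin m) (S.integer K)) ≠
        Matrix.trace (↑(ρ η) : Matrix (Fin m) (Fin m) (S.integer K))) :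
    ∃ C : ℕ, 0 < C ∧ ∀ n : ℕ, ∀ γ η : Γ, inBall X n γ → inBall X n η → ¬ IsConj γ η →
      ∃ (Δ : Subgroup Γ) (_ : Δ.Normal), Δ.FiniteIndex ∧
        Δ.index ≤ C * n ^ (m ^ 2 - 1) ∧
        ¬ IsConj (QuotientGroup.mk' Δ γ) (QuotientGroup.mk' Δ η) := by
  obtain ⟨D, hD0, hDS, c, hc, hDc⟩ := exists_integral_trace_sub X hS ρ
  obtain ⟨C, hC, hprime⟩ := exists_prime_notMem_absNorm_le K c hc
  refine ⟨C ^ (m ^ 2 - 1), by positivity, fun n γ η hγ hη hconj => ?_⟩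
  have hne := hA γ η hconj
  have hm : 0 < m := by
    rcases Nat.eq_zero_or_pos m with rfl | h
    · exact absurd (by simp [Matrix.trace]) hne
    · exact h
  have hn : 0 < n := by
    rcases Nat.eq_zero_or_pos n with rfl | h
    · obtain ⟨l, _, hl, rfl⟩ := hγ
      obtain ⟨l', _, hl', rfl⟩ := hη
      rw [List.length_eq_zero_iff.1 (Nat.le_zero.1 hl),
        List.length_eq_zero_iff.1 (Nat.le_zero.1 hl')] at hconj
      exact absurd (IsConj.refl _) hconj
    · exact h
  obtain ⟨a, hDa, ha, halog⟩ := hDc n hn γ η hγ hη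
  have hinj : Function.Injective (algebraMap (NumberField.RingOfIntegers K) (S.integer K)) :=
    FaithfulSMul.algebraMap_injective _ _
  have ha0 : a ≠ 0 := by
    rintro rfl
    rw [map_zero] at ha
    refine mul_ne_zero (pow_ne_zero (n + 1) ?_) (sub_ne_zero.2 hne) ha.symm
    rwa [Ne, map_eq_zero_iff _ hinj]
  obtain ⟨P, hP, haP, hPn⟩ := hprime n hn a ha0 halog
  let v : IsDedekindDomain.HeightOneSpectrum (NumberField.RingOfIntegers K) :=
    ⟨P, Ideal.isPrime_of_prime hP, hP.ne_zero⟩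
  have hmax : P.IsMaximal := v.isMaximal
  let _ := Ideal.Quotient.field P
  have hfin : Finite (NumberField.RingOfIntegers K ⧸ P) :=
    Ideal.finiteQuotientOfFreeOfNeBot P hP.ne_zero
  have hvS : v ∉ S := fun hv => haP (Ideal.mem_of_dvd P hDa (hDS v hv))
  obtain ⟨φ, hφ⟩ := exists_integer_hom_residue hvS
  have hφtr : φ (Matrix.trace (ρ γ : Matrix (Fin m) (Fin m) (S.integer K))) ≠
      φ (Matrix.trace (ρ η : Matrix (Fin m) (Fin m) (S.integer K))) := by
    intro h
    have h1 := hφ a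
    rw [ha, map_mul, map_sub, h, sub_self, mul_zero] at h1
    exact haP (Ideal.Quotient.eq_zero_iff_mem.1 h1.symm)
  let f : Γ →* Matrix.SpecialLinearGroup (Fin m) (NumberField.RingOfIntegers K ⧸ P) :=
    (Matrix.SpecialLinearGroup.map φ).comp ρ
  have hftr : ∀ g : Γ, Matrix.trace (f g : Matrix (Fin m) (Fin m) _) =
      φ (Matrix.trace (ρ g : Matrix (Fin m) (Fin m) (S.integer K))) :=
    fun g => (AddMonoidHom.map_trace φ.toAddMonoidHom _).symm
  have hfinSL : Finite (Matrix.SpecialLinearGroup (Fin m) (NumberField.RingOfIntegers K ⧸ P)) :=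
    inferInstanceAs (Finite (Subtype _))
  refine ⟨f.ker, inferInstance, inferInstance, ?_, fun h => hφtr ?_⟩
  · calc f.ker.index ≤ Nat.card (Matrix.SpecialLinearGroup (Fin m)
          (NumberField.RingOfIntegers K ⧸ P)) := by
          rw [Subgroup.index_ker]
          exact Subgroup.card_le_card_group _
      _ ≤ Nat.card (NumberField.RingOfIntegers K ⧸ P) ^ (m ^ 2 - 1) :=
          card_specialLinearGroup_le _ hm
      _ ≤ (C * n) ^ (m ^ 2 - 1) := Nat.pow_le_pow_left hPn _
      _ = _ := mul_pow _ _ _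
  · obtain ⟨g, hg⟩ := isConj_iff.1 (MonoidHom.map_isConj (QuotientGroup.kerLift f) h)
    have hg' : g * f γ * g⁻¹ = f η := hg
    rw [← hftr, ← hftr, ← hg', Matrix.SpecialLinearGroup.coe_mul, Matrix.trace_mul_comm,
      ← Matrix.SpecialLinearGroup.coe_mul, inv_mul_cancel_left]
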